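/- arXiv:0706.1091 — 2 statements merged into one kernel-verified Lean document; each statement's English description precedes it below -/
import Mathlib

section
/- Let H be a real inner product space. Then for all measurable functions g, h : 𝕋 → H with ‖g(x)‖ = 1 and ‖h(y)‖ = 1 for almost every x, y, one has ∬_{𝕋×𝕋} f(x,y) ⟨g(x), h(y)⟩ dx dy ≤ 2/π. -/
open MeasureTheory
open scoped RealInnerProductSpace

/-- The kernel `f(x, y)` of the theorem is `quarterSign (x - y)`. -/
noncomputable def quarterSign (t : UnitAddCircle) : ℝ := if ‖t‖ < 1 / 4 then 1 else -1

theorem UnitAddCircle.volume_eq_haarAddCircle :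
    (volume : Measure UnitAddCircle) = AddCircle.haarAddCircle := by
  rw [AddCircle.volume_eq_smul_haarAddCircle]
  simp

theorem measurable_quarterSign : Measurable quarterSign :=
  Measurable.ite (measurableSet_lt measurable_norm measurable_const) measurable_const
    measurable_const

theorem norm_quarterSign (t : UnitAddCircle) : ‖quarterSign t‖ = 1 := by
  unfold quarterSign
  split_ifs <;> simp

theorem quarterSign_coe_of_abs_lt {x : ℝ} (hx : |x| < 1 / 4) :
    quarterSign (x : UnitAddCircle) = 1 := by
  have h : ‖(x : UnitAddCircle)‖ = |x| :=
    (AddCircle.norm_coe_eq_abs_iff 1 one_ne_zero).2 (by norm_num; linarith)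
  rw [quarterSign, h, if_pos hx]

theorem quarterSign_coe_of_mem_Icc {x : ℝ} (hx : x ∈ Set.Icc (1 / 4 : ℝ) (3 / 4)) :
    quarterSign (x : UnitAddCircle) = -1 := by
  obtain ⟨h₁, h₂⟩ := hx
  rw [quarterSign, if_neg]
  rw [not_lt]
  rcases le_total x (1 / 2) with h | h
  · have h' : |x| ≤ |(1 : ℝ)| / 2 := by rw [abs_of_nonneg (by linarith)]; norm_num; linarith
    rw [(AddCircle.norm_coe_eq_abs_iff 1 one_ne_zero).2 h', abs_of_nonneg (by linarith)]
    exact h₁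
  · have h' : |x - 1| ≤ |(1 : ℝ)| / 2 := by
      rw [abs_of_nonpos (by linarith)]; norm_num; linarith
    have hc : (x : UnitAddCircle) = ((x - 1 : ℝ) : UnitAddCircle) := by
      have := AddCircle.coe_add_period 1 (x - 1)
      simpa using this
    rw [hc, (AddCircle.norm_coe_eq_abs_iff 1 one_ne_zero).2 h', abs_of_nonpos (by linarith)]
    linarith

theorem UnitAddCircle.ae_norm_ne_quarter : ∀ᵐ t : UnitAddCircle, ‖t‖ ≠ 1 / 4 := by
  have hm : MeasurableSet {t : UnitAddCircle | ‖t‖ = 1 / 4} :=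
    measurable_norm (measurableSet_singleton _)
  have h := AddCircle.add_projection_respects_measure 1 (-1 / 2) hm
  simp only [ae_iff, not_not]
  rw [h]
  refine measure_mono_null ?_ (Set.Finite.measure_zero
    (Set.toFinite ({1 / 4, -(1 / 4)} : Set ℝ)) volume)
  rintro x ⟨hx, hx₁, hx₂⟩
  have hx' : ‖(x : UnitAddCircle)‖ = 1 / 4 := hx
  rw [(AddCircle.norm_coe_eq_abs_iff 1 one_ne_zero).2
    (by rw [abs_le]; constructor <;> norm_num <;> linarith)] at hx'
  exact eq_or_eq_neg_of_abs_eq hx'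

theorem continuousAt_quarterSign {t : UnitAddCircle} (ht : ‖t‖ ≠ 1 / 4) :
    ContinuousAt quarterSign t := by
  rcases ht.lt_or_gt with h | h
  · refine (continuousAt_const (y := (1 : ℝ))).congr ?_
    filter_upwards [continuous_norm.continuousAt.eventually_lt continuousAt_const h] with s hs
    simp only [quarterSign]
    rw [if_pos hs]
  · refine (continuousAt_const (y := (-1 : ℝ))).congr ?_
    filter_upwards [continuousAt_const.eventually_lt continuous_norm.continuousAt h] with s hs
    simp only [quarterSign]
    rw [if_neg (not_lt.2 hs.le)]

theorem integral_fourier_mul_quarterSign (n : ℤ) :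
    ∫ t, fourier (-n) t * (quarterSign t : ℂ) =
      (∫ x in (-(1 / 4) : ℝ)..1 / 4, fourier (-n) (x : UnitAddCircle)) -
        ∫ x in (1 / 4 : ℝ)..3 / 4, fourier (-n) (x : UnitAddCircle) := by
  have hc : Continuous fun x : ℝ => fourier (-n) (x : UnitAddCircle) :=
    (map_continuous (fourier (-n))).comp (AddCircle.continuous_mk' _)
  have e₁ : Set.EqOn (fun x : ℝ => fourier (-n) (x : UnitAddCircle))
      (fun x : ℝ => fourier (-n) (x : UnitAddCircle) * (quarterSign x : ℂ))
      (Set.Ioo (-(1 / 4)) (1 / 4)) := fun x hx => by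
    simp only [quarterSign_coe_of_abs_lt (abs_lt.2 hx), Complex.ofReal_one, mul_one]
  have e₂ : Set.EqOn (fun x : ℝ => -fourier (-n) (x : UnitAddCircle))
      (fun x : ℝ => fourier (-n) (x : UnitAddCircle) * (quarterSign x : ℂ))
      (Set.Ioo (1 / 4) (3 / 4)) := fun x hx => by
    simp only [quarterSign_coe_of_mem_Icc (Set.Ioo_subset_Icc_self hx), Complex.ofReal_neg,
      Complex.ofReal_one, mul_neg, mul_one]
  have i₁ := (hc.intervalIntegrable (μ := volume) (-(1 / 4)) (1 / 4)).congr_uIoo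
    (by rwa [Set.uIoo_of_le (by norm_num)])
  have i₂ := (hc.neg.intervalIntegrable (μ := volume) (1 / 4) (3 / 4)).congr_uIoo
    (by rwa [Set.uIoo_of_le (by norm_num)])
  rw [← UnitAddCircle.intervalIntegral_preimage (-(1 / 4)),
    show (-(1 / 4) + 1 : ℝ) = 3 / 4 by norm_num,
    ← intervalIntegral.integral_add_adjacent_intervals i₁ i₂, sub_eq_add_neg,
    ← intervalIntegral.integral_neg]
  congr 1
  · exact (intervalIntegral.integral_congr_Ioo_of_le (by norm_num) e₁).symm
  · exact (intervalIntegral.integral_congr_Ioo_of_le (by norm_num) e₂).symm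

theorem norm_integral_fourier_mul_quarterSign_le (n : ℤ) :
    ‖∫ t, fourier (-n) t * (quarterSign t : ℂ)‖ ≤ 2 / Real.pi := by
  rw [integral_fourier_mul_quarterSign]
  rcases eq_or_ne n 0 with rfl | hn
  · simp only [neg_zero, fourier_zero, intervalIntegral.integral_const]
    norm_num
    positivity
  have hc : Continuous fun x : ℝ => fourier (-n) (x : UnitAddCircle) :=
    (map_continuous (fourier (-n))).comp (AddCircle.continuous_mk' _)
  have hF (a b : ℝ) : ‖∫ x in a..b, fourier (-n) (x : UnitAddCircle)‖ ≤ 1 / Real.pi := by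
    rw [intervalIntegral.integral_eq_sub_of_hasDerivAt
      (fun x _ => has_antideriv_at_fourier_neg ⟨one_pos⟩ hn x) (hc.intervalIntegrable _ _),
      ← mul_sub, norm_mul]
    have h₁ : ‖((1 : ℝ) : ℂ) / (-2 * Real.pi * Complex.I * n)‖ ≤ 1 / (2 * Real.pi) := by
      have : (1 : ℝ) ≤ |(n : ℝ)| := by exact_mod_cast Int.one_le_abs hn
      simp only [norm_div, norm_mul, norm_neg, Complex.norm_real, Complex.norm_I, norm_one,
        Complex.norm_intCast, RCLike.norm_ofNat, Real.norm_eq_abs, abs_of_pos Real.pi_pos, mul_one]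
      exact one_div_le_one_div_of_le (by positivity)
        (le_mul_of_one_le_right (by positivity) this)
    have h₂ : ‖fourier (-n) (b : UnitAddCircle) - fourier (-n) (a : UnitAddCircle)‖ ≤ 2 := by
      refine (norm_sub_le _ _).trans ?_
      simp only [fourier_apply, Circle.norm_coe]
      norm_num
    calc _ ≤ 1 / (2 * Real.pi) * 2 := mul_le_mul h₁ h₂ (norm_nonneg _) (by positivity)
      _ = 1 / Real.pi := by field_simp
  calc _ ≤ 1 / Real.pi + 1 / Real.pi := (norm_sub_le _ _).trans (add_le_add (hF _ _) (hF _ _))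
    _ = 2 / Real.pi := by ring

theorem integrable_quarterSign_sub_mul {φ : UnitAddCircle → ℝ} (hφ : Integrable φ)
    (x : UnitAddCircle) : Integrable fun y => quarterSign (x - y) * φ y :=
  hφ.bdd_mul (c := 1)
    (measurable_quarterSign.comp (measurable_const.sub measurable_id)).aestronglyMeasurable
    (ae_of_all _ fun y => (norm_quarterSign (x - y)).le)

theorem hasSum_norm_sq_integral_fourier {F : UnitAddCircle → ℂ} (hF : MemLp F 2) :
    HasSum (fun n : ℤ => ‖∫ t, fourier (-n) t * F t‖ ^ 2) (∫ t, ‖F t‖ ^ 2) := by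
  rw [UnitAddCircle.volume_eq_haarAddCircle] at hF ⊢
  convert! hasSum_sq_fourierCoeff hF.toLp using 1
  · ext n
    rw [fourierCoeff_congr_ae hF.coeFn_toLp]
    rfl
  · refine integral_congr_ae ?_
    filter_upwards [hF.coeFn_toLp] with x hx
    rw [hx]

theorem integral_fourier_mul_integral_quarterSign {φ : UnitAddCircle → ℝ} (hφ : Integrable φ)
    (n : ℤ) :
    ∫ x, fourier (-n) x * ((∫ y, quarterSign (x - y) * φ y : ℝ) : ℂ) =
      (∫ t, fourier (-n) t * (quarterSign t : ℂ)) * ∫ y, fourier (-n) y * (φ y : ℂ) := by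
  have hint : Integrable (fun p : UnitAddCircle × UnitAddCircle =>
      fourier (-n) p.1 * ((quarterSign (p.1 - p.2) : ℂ) * (φ p.2 : ℂ)))
      ((volume : Measure UnitAddCircle).prod volume) := by
    have h₂ : Integrable (fun p : UnitAddCircle × UnitAddCircle => (φ p.2 : ℂ))
        ((volume : Measure UnitAddCircle).prod volume) :=
      (Integrable.ofReal (𝕜 := ℂ) hφ).comp_snd _
    have h₁ : Measurable fun p : UnitAddCircle × UnitAddCircle =>
        (quarterSign (p.1 - p.2) : ℂ) :=
      Complex.measurable_ofReal.comp
        (measurable_quarterSign.comp (measurable_fst.sub measurable_snd))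
    refine (h₂.bdd_mul (c := 1) h₁.aestronglyMeasurable (ae_of_all _ fun p => ?_)).bdd_mul
      (c := 1) ((map_continuous (fourier (-n))).comp continuous_fst).aestronglyMeasurable
      (ae_of_all _ fun p => ?_)
    · rw [Complex.norm_real, norm_quarterSign]
    · simp only [fourier_apply, Circle.norm_coe, le_refl]
  calc _ = ∫ x, ∫ y, fourier (-n) x * ((quarterSign (x - y) : ℂ) * (φ y : ℂ)) := by
        refine integral_congr_ae (ae_of_all _ fun x => ?_)
        simp only [integral_const_mul, ← integral_complex_ofReal, Complex.ofReal_mul]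
    _ = ∫ y, ∫ x, fourier (-n) x * ((quarterSign (x - y) : ℂ) * (φ y : ℂ)) :=
        integral_integral_swap hint
    _ = ∫ y, (∫ t, fourier (-n) t * (quarterSign t : ℂ)) * (fourier (-n) y * (φ y : ℂ)) := by
        refine integral_congr_ae (ae_of_all _ fun y => ?_)
        simp only
        rw [← integral_add_right_eq_self _ y, ← integral_mul_const]
        refine integral_congr_ae (ae_of_all _ fun t => ?_)
        simp only [add_sub_cancel_right, fourier_apply, smul_add, AddCircle.toCircle_add,
          Circle.coe_mul]
        ring
    _ = _ := integral_const_mul _ _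

/-- Convolution with `quarterSign` has norm at most `2 / π` on `L²`. -/
theorem integral_sq_integral_quarterSign_le {φ : UnitAddCircle → ℝ} (hφ : MemLp φ 2) :
    ∫ x, (∫ y, quarterSign (x - y) * φ y) ^ 2 ≤ (2 / Real.pi) ^ 2 * ∫ y, φ y ^ 2 := by
  have hi : Integrable φ := hφ.integrable (by norm_num)
  have hm : AEStronglyMeasurable (fun x => ∫ y, quarterSign (x - y) * φ y)
      (volume : Measure UnitAddCircle) := by
    have h : AEStronglyMeasurable (fun p : UnitAddCircle × UnitAddCircle =>
        quarterSign (p.1 - p.2) * φ p.2) ((volume : Measure UnitAddCircle).prod volume) :=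
      (measurable_quarterSign.comp
        (measurable_fst.sub measurable_snd)).aestronglyMeasurable.mul hi.1.comp_snd
    exact h.integral_prod_right'
  have hT : MemLp (fun x => ∫ y, quarterSign (x - y) * φ y) 2 := by
    refine MemLp.of_bound hm (∫ y, ‖φ y‖) (ae_of_all _ fun x => ?_)
    refine (norm_integral_le_integral_norm _).trans (le_of_eq ?_)
    simp only [norm_mul, norm_quarterSign, one_mul]
  have h₁ := hasSum_norm_sq_integral_fourier hT.ofReal
  have h₂ := (hasSum_norm_sq_integral_fourier hφ.ofReal).mul_left ((2 / Real.pi) ^ 2)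
  have h := hasSum_le (fun n => ?_) h₁ h₂
  · simpa using h
  · change ‖∫ x, fourier (-n) x * ((∫ y, quarterSign (x - y) * φ y : ℝ) : ℂ)‖ ^ 2 ≤ _
    rw [integral_fourier_mul_integral_quarterSign hi, norm_mul, mul_pow]
    exact mul_le_mul_of_nonneg_right (pow_le_pow_left₀ (norm_nonneg _)
      (norm_integral_fourier_mul_quarterSign_le n) 2) (by positivity)

section WeakIntegral

variable {α H : Type*} [MeasurableSpace α] {μ : Measure α} [NormedAddCommGroup H]
  [InnerProductSpace ℝ H] {h : α → H}

theorem ae_abs_inner_le (hb : ∀ᵐ y ∂μ, ‖h y‖ ≤ 1) (v : H) : ∀ᵐ y ∂μ, |⟪v, h y⟫| ≤ ‖v‖ := by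
  filter_upwards [hb] with y hy
  exact (abs_real_inner_le_norm _ _).trans (mul_le_of_le_one_right (norm_nonneg _) hy)

theorem abs_integral_mul_inner_le (hb : ∀ᵐ y ∂μ, ‖h y‖ ≤ 1) {w : α → ℝ}
    (hw : Integrable w μ) (v : H) : |∫ y, w y * ⟪v, h y⟫ ∂μ| ≤ (∫ y, |w y| ∂μ) * ‖v‖ := by
  rw [← integral_mul_const, ← Real.norm_eq_abs]
  refine norm_integral_le_of_norm_le (hw.abs.mul_const _) ?_
  filter_upwards [ae_abs_inner_le hb v] with y hy
  rw [norm_mul, Real.norm_eq_abs, Real.norm_eq_abs]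
  exact mul_le_mul_of_nonneg_left hy (abs_nonneg _)

variable [MeasurableSpace H] [BorelSpace H]

theorem measurable_inner_left (hm : Measurable h) (v : H) : Measurable fun y => ⟪v, h y⟫ :=
  (innerSL ℝ v).continuous.measurable.comp hm

theorem integrable_mul_inner (hm : Measurable h) (hb : ∀ᵐ y ∂μ, ‖h y‖ ≤ 1) {w : α → ℝ}
    (hw : Integrable w μ) (v : H) : Integrable (fun y => w y * ⟪v, h y⟫) μ :=
  hw.mul_bdd (c := ‖v‖) (measurable_inner_left hm v).aestronglyMeasurable (ae_abs_inner_le hb v)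

/-- A bounded measurable function into a Hilbert space has a weak (Pettis) integral against every
integrable weight, even if it is not strongly measurable. -/
theorem exists_weakIntegral [CompleteSpace H] (hm : Measurable h) (hb : ∀ᵐ y ∂μ, ‖h y‖ ≤ 1)
    {w : α → ℝ} (hw : Integrable w μ) : ∃ p : H, ∀ v, ⟪p, v⟫ = ∫ y, w y * ⟪v, h y⟫ ∂μ := by
  let L : H →ₗ[ℝ] ℝ :=
    { toFun := fun v => ∫ y, w y * ⟪v, h y⟫ ∂μ
      map_add' := fun u v => by
        simp only [inner_add_left, mul_add]
        exact integral_add (integrable_mul_inner hm hb hw u) (integrable_mul_inner hm hb hw v)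
      map_smul' := fun c v => by
        simp only [real_inner_smul_left, RingHom.id_apply, smul_eq_mul, mul_left_comm (w _) c]
        exact integral_const_mul _ _ }
  refine ⟨(InnerProductSpace.toDual ℝ H).symm
    (L.mkContinuous (∫ y, |w y| ∂μ) (abs_integral_mul_inner_le hb hw)), fun v => ?_⟩
  rw [InnerProductSpace.toDual_symm_apply]
  rfl

theorem norm_sub_le_of_inner_eq_integral (hm : Measurable h) (hb : ∀ᵐ y ∂μ, ‖h y‖ ≤ 1)
    {w₁ w₂ : α → ℝ} (hw₁ : Integrable w₁ μ) (hw₂ : Integrable w₂ μ) {p₁ p₂ : H}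
    (hp₁ : ∀ v, ⟪p₁, v⟫ = ∫ y, w₁ y * ⟪v, h y⟫ ∂μ)
    (hp₂ : ∀ v, ⟪p₂, v⟫ = ∫ y, w₂ y * ⟪v, h y⟫ ∂μ) :
    ‖p₁ - p₂‖ ≤ ∫ y, |w₁ y - w₂ y| ∂μ := by
  have key : ‖p₁ - p₂‖ * ‖p₁ - p₂‖ ≤ (∫ y, |w₁ y - w₂ y| ∂μ) * ‖p₁ - p₂‖ := by
    rw [← real_inner_self_eq_norm_mul_norm, inner_sub_left, hp₁, hp₂,
      ← integral_sub (integrable_mul_inner hm hb hw₁ _) (integrable_mul_inner hm hb hw₂ _)]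
    simp only [← sub_mul]
    exact (le_abs_self _).trans (abs_integral_mul_inner_le hb (hw₁.sub hw₂) _)
  rcases (norm_nonneg (p₁ - p₂)).eq_or_lt with h0 | h0
  · rw [← h0]
    exact integral_nonneg fun y => abs_nonneg _
  · exact le_of_mul_le_mul_right key h0

end WeakIntegral

theorem integrable_quarterSign_sub (x : UnitAddCircle) :
    Integrable fun y => quarterSign (x - y) := by
  simpa using integrable_quarterSign_sub_mul (integrable_const (1 : ℝ)) x

theorem tendsto_integral_abs_quarterSign_sub (x₀ : UnitAddCircle) :
    Filter.Tendsto (fun x => ∫ y, |quarterSign (x - y) - quarterSign (x₀ - y)|)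
      (nhds x₀) (nhds 0) := by
  rw [← integral_zero UnitAddCircle ℝ (μ := volume)]
  refine tendsto_integral_filter_of_dominated_convergence (fun _ => (2 : ℝ))
    (Filter.Eventually.of_forall fun x => ?_)
    (Filter.Eventually.of_forall fun x => ae_of_all _ fun y => ?_) (integrable_const _) ?_
  · exact ((integrable_quarterSign_sub x).sub (integrable_quarterSign_sub x₀)).abs.1
  · rw [Real.norm_eq_abs, abs_abs, ← Real.norm_eq_abs]
    refine (norm_sub_le _ _).trans ?_
    rw [norm_quarterSign, norm_quarterSign]
    norm_num
  · have hq := (Measure.measurePreserving_sub_left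
      (volume : Measure UnitAddCircle) x₀).quasiMeasurePreserving.ae
      UnitAddCircle.ae_norm_ne_quarter
    filter_upwards [hq] with y hy
    have hc : ContinuousAt (fun x => quarterSign (x - y)) x₀ :=
      ContinuousAt.comp (f := fun x => x - y) (g := quarterSign) (continuousAt_quarterSign hy)
        (continuous_id.sub continuous_const).continuousAt
    have := (hc.sub (continuousAt_const (y := quarterSign (x₀ - y)))).abs
    simpa [ContinuousAt] using this.tendsto

/-- Bessel's inequality and the scalar bound give the bound for finitely many coordinates. -/
theorem sum_integral_sq_quarterSign_le {H ι : Type*} [Fintype ι] [NormedAddCommGroup H]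
    [InnerProductSpace ℝ H] [MeasurableSpace H] [BorelSpace H] {h : UnitAddCircle → H}
    (hm : Measurable h) (hb : ∀ᵐ y, ‖h y‖ ≤ 1) {e : ι → H} (he : Orthonormal ℝ e) :
    ∑ i, ∫ x, (∫ y, quarterSign (x - y) * ⟪e i, h y⟫) ^ 2 ≤ (2 / Real.pi) ^ 2 := by
  have hL (i : ι) : MemLp (fun y => ⟪e i, h y⟫) 2 :=
    MemLp.of_bound (measurable_inner_left hm _).aestronglyMeasurable ‖e i‖ (ae_abs_inner_le hb _)
  calc _ ≤ ∑ i, (2 / Real.pi) ^ 2 * ∫ y, ⟪e i, h y⟫ ^ 2 :=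
        Finset.sum_le_sum fun i _ => integral_sq_integral_quarterSign_le (hL i)
    _ = (2 / Real.pi) ^ 2 * ∫ y, ∑ i, ⟪e i, h y⟫ ^ 2 := by
        rw [← Finset.mul_sum, integral_finsetSum _ fun i _ => (hL i).integrable_sq]
    _ ≤ (2 / Real.pi) ^ 2 * ∫ _ : UnitAddCircle, (1 : ℝ) := by
        refine mul_le_mul_of_nonneg_left (integral_mono_ae
          (integrable_finsetSum _ fun i _ => (hL i).integrable_sq) (integrable_const _) ?_)
          (by positivity)
        filter_upwards [hb] with y hy
        have := he.sum_inner_products_le (x := h y) (s := Finset.univ)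
        simp only [Real.norm_eq_abs, sq_abs] at this
        exact this.trans (pow_le_one₀ (norm_nonneg _) hy)
    _ = (2 / Real.pi) ^ 2 := by simp [measureReal_def]

/-- A function with totally bounded range is uniformly close to a finite-dimensional subspace. -/
theorem exists_orthonormal_norm_le_of_totallyBounded {α H : Type*} [NormedAddCommGroup H]
    [InnerProductSpace ℝ H] {G : α → H} (hG : TotallyBounded (Set.range G)) {ε : ℝ} (hε : 0 < ε) :
    ∃ (n : ℕ) (e : Fin n → H), Orthonormal ℝ e ∧
      ∀ x, ‖G x‖ ≤ √(∑ i, ⟪G x, e i⟫ ^ 2) + ε := by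
  obtain ⟨t, ht, hGt⟩ := Metric.totallyBounded_iff.1 hG ε hε
  let E := Submodule.span ℝ t
  have : FiniteDimensional ℝ E := FiniteDimensional.span_of_finite ℝ ht
  let b := stdOrthonormalBasis ℝ E
  refine ⟨_, fun i => (b i : H), b.orthonormal.comp_linearIsometry E.subtypeₗᵢ, fun x => ?_⟩
  obtain ⟨u, hu, hxu⟩ := Set.mem_iUnion₂.1 (hGt ⟨x, rfl⟩)
  have hP : ‖E.orthogonalProjectionOnto (G x)‖ = √(∑ i, ⟪G x, (b i : H)⟫ ^ 2) := by
    rw [eq_comm, Real.sqrt_eq_iff_eq_sq (by positivity) (norm_nonneg _),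
      ← b.sum_sq_norm_inner_right]
    refine Finset.sum_congr rfl fun i _ => ?_
    rw [Real.norm_eq_abs, sq_abs, real_inner_comm, E.inner_orthogonalProjectionOnto_eq_of_mem_left]
  rw [← hP]
  have h₁ : ‖G x - E.starProjection (G x)‖ ≤ ‖G x - u‖ := by
    rw [E.starProjection_minimal]
    exact ciInf_le ⟨0, by rintro _ ⟨v, rfl⟩; exact norm_nonneg _⟩
      (⟨u, Submodule.subset_span hu⟩ : E)
  rw [Metric.mem_ball, dist_eq_norm] at hxu
  have h₂ : ‖E.starProjection (G x)‖ = ‖E.orthogonalProjectionOnto (G x)‖ := rfl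
  linarith [norm_le_norm_add_norm_sub (E.starProjection (G x)) (G x),
    norm_sub_rev (G x) (E.starProjection (G x))]

theorem integral_quarterSign_mul_inner_le {H : Type*} [NormedAddCommGroup H]
    [InnerProductSpace ℝ H] [CompleteSpace H] [MeasurableSpace H] [BorelSpace H]
    {g h : UnitAddCircle → H} (hm : Measurable h) (hg : ∀ᵐ x, ‖g x‖ ≤ 1) (hb : ∀ᵐ y, ‖h y‖ ≤ 1) :
    ∫ x, ∫ y, quarterSign (x - y) * ⟪g x, h y⟫ ≤ 2 / Real.pi := by
  choose G hG using fun x => exists_weakIntegral hm hb (integrable_quarterSign_sub x)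
  have hGc : Continuous G := continuous_iff_continuousAt.2 fun x₀ =>
    tendsto_iff_norm_sub_tendsto_zero.2 <| squeeze_zero (fun _ => norm_nonneg _)
      (fun x => norm_sub_le_of_inner_eq_integral hm hb (integrable_quarterSign_sub x)
        (integrable_quarterSign_sub x₀) (hG x) (hG x₀))
      (tendsto_integral_abs_quarterSign_sub x₀)
  simp only [← hG]
  by_cases hint : Integrable fun x => ⟪G x, g x⟫
  swap
  · rw [integral_undef hint]
    positivity
  refine le_of_forall_pos_le_add fun ε hε => ?_
  obtain ⟨n, e, he, hGe⟩ := exists_orthonormal_norm_le_of_totallyBounded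
    (isCompact_range hGc).totallyBounded hε
  have hi (i : Fin n) : Integrable fun x => ⟪G x, e i⟫ ^ 2 :=
    ((hGc.inner continuous_const).pow 2).integrable_of_hasCompactSupport
      (HasCompactSupport.of_compactSpace _)
  have hsum := integrable_finsetSum Finset.univ fun i _ => hi i
  have hπ := Real.pi_pos
  have hS : ∫ x, ∑ i, ⟪G x, e i⟫ ^ 2 ≤ (2 / Real.pi) ^ 2 := by
    rw [integral_finsetSum _ fun i _ => hi i]
    simp only [hG]
    exact sum_integral_sq_quarterSign_le hm hb he
  calc ∫ x, ⟪G x, g x⟫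
      ≤ ∫ x, (Real.pi / 4 * ∑ i, ⟪G x, e i⟫ ^ 2 + (1 / Real.pi + ε)) := by
        refine integral_mono_ae hint ((hsum.const_mul _).add (integrable_const _)) ?_
        filter_upwards [hg] with x hx
        have h₁ : ⟪G x, g x⟫ ≤ ‖G x‖ :=
          (real_inner_le_norm _ _).trans (mul_le_of_le_one_right (norm_nonneg _) hx)
        have hs : 0 ≤ ∑ i, ⟪G x, e i⟫ ^ 2 := by positivity
        have h₂ : √(∑ i, ⟪G x, e i⟫ ^ 2) ≤
            Real.pi / 4 * ∑ i, ⟪G x, e i⟫ ^ 2 + 1 / Real.pi := by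
          set s := √(∑ i, ⟪G x, e i⟫ ^ 2) with hsdef
          rw [← Real.sq_sqrt hs, ← hsdef]
          have : Real.pi / 4 * s ^ 2 + 1 / Real.pi - s = (Real.pi * s - 2) ^ 2 / (4 * Real.pi) := by
            field_simp
            ring
          have : 0 ≤ (Real.pi * s - 2) ^ 2 / (4 * Real.pi) := by positivity
          linarith
        linarith [hGe x]
    _ = Real.pi / 4 * (∫ x, ∑ i, ⟪G x, e i⟫ ^ 2) + (1 / Real.pi + ε) := by
        rw [integral_add (hsum.const_mul _) (integrable_const _), integral_const_mul]
        simp [measureReal_def]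
    _ ≤ Real.pi / 4 * (2 / Real.pi) ^ 2 + (1 / Real.pi + ε) := by gcongr
    _ = 2 / Real.pi + ε := by field_simp; ring

/-- Let `𝕋 = ℝ/ℤ` with its Haar probability measure, `f(x,y) = 1` if `dist x y < 1/4` and
`-1` otherwise, and let `H` be a real inner product space. For all measurable
`g, h : 𝕋 → H` of unit norm a.e., `∬ f(x,y) ⟨g(x), h(y)⟩ ≤ 2/π`. -/
theorem bell_example2_hilbert_bound (H : Type*) [NormedAddCommGroup H]
    [InnerProductSpace ℝ H] [MeasurableSpace H] [BorelSpace H]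
    (g h : UnitAddCircle → H) (hgm : Measurable g) (hhm : Measurable h)
    (hg1 : ∀ᵐ x : UnitAddCircle, ‖g x‖ = 1)
    (hh1 : ∀ᵐ y : UnitAddCircle, ‖h y‖ = 1) :
    (∫ x : UnitAddCircle, ∫ y : UnitAddCircle,
        (if dist x y < 1/4 then (1:ℝ) else -1) * ⟪g x, h y⟫) ≤ 2 / Real.pi := by

  borelize (UniformSpace.Completion H)
  have hc : Measurable ((↑) : H → UniformSpace.Completion H) :=
    (UniformSpace.Completion.continuous_coe H).measurable
  have key := integral_quarterSign_mul_inner_le (g := fun x => (g x : UniformSpace.Completion H))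
    (hc.comp hhm) (by filter_upwards [hg1] with x hx; simp [hx])
    (by filter_upwards [hh1] with y hy; simp [hy])
  simpa only [Function.comp_apply, UniformSpace.Completion.inner_coe, quarterSign,
    ← dist_eq_norm] using key
end

section
/- Let H be a real inner product space and let h : 𝕋 → H be a measurable function with ‖h(y)‖ = 1 for almost every y. Define G : 𝕋 → H by G(x) = ∫_𝕋 f(x,y) h(y) dy. Then: (i) G is Lipschitz with Lipschitz constant 4; (ii) for almost every x ∈ 𝕋, G is differentiable at x with G'(x) = 2 h(x + 1/4) − 2 h(x − 1/4); (iii) G(x + 1/2) = −G(x) for all x ∈ 𝕋. -/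
open MeasureTheory

open Set Filter Topology Metric in
/-- A closed set with uncountable continuous image contains two small closed subsets with
uncountable and disjoint images. -/
theorem IsClosed.exists_small_diam_splitting_image {X Y : Type*} [MetricSpace X]
    [SecondCountableTopology X] [TopologicalSpace Y] [T2Space Y] {f : X → Y} (hf : Continuous f)
    {C : Set X} (hC : IsClosed C) (hunc : ¬(f '' C).Countable) {ε : ENNReal} (hε : 0 < ε) :
    ∃ C₀ C₁ : Set X, (IsClosed C₀ ∧ ¬(f '' C₀).Countable ∧ C₀ ⊆ C ∧ ediam C₀ ≤ ε) ∧
      (IsClosed C₁ ∧ ¬(f '' C₁).Countable ∧ C₁ ⊆ C ∧ ediam C₁ ≤ ε) ∧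
      Disjoint (f '' C₀) (f '' C₁) := by
  let C' : Set X := {x ∈ C | ∀ U ∈ 𝓝 x, ¬(f '' (U ∩ C)).Countable}
  have hdiff : (f '' (C \ C')).Countable := by
    have hsmall : ∀ x ∈ C \ C', ∃ U ∈ 𝓝 x, (f '' (U ∩ C)).Countable := by
      rintro x ⟨hx, hx'⟩
      by_contra! hcon
      exact hx' ⟨hx, hcon⟩
    choose! U hU hUc using hsmall
    obtain ⟨t, htC, ht, hcover⟩ := TopologicalSpace.countable_cover_nhdsWithin
      fun x hx => mem_nhdsWithin_of_mem_nhds (hU x hx)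
    refine (ht.biUnion fun x hx => hUc x (htC hx)).mono ?_
    rintro _ ⟨x, hx, rfl⟩
    obtain ⟨y, hy, hxy⟩ := mem_iUnion₂.1 (hcover hx)
    exact mem_iUnion₂.2 ⟨y, hy, x, ⟨hxy, hx.1⟩, rfl⟩
  have hnsub : ¬(f '' C').Subsingleton := by
    intro hsub
    refine hunc ((hdiff.union hsub.finite.countable).mono ?_)
    rw [← image_union]
    refine image_mono fun x hx => ?_
    by_cases hx' : x ∈ C'
    exacts [.inr hx', .inl ⟨hx, hx'⟩]
  obtain ⟨_, ⟨x, hx, rfl⟩, _, ⟨y, hy, rfl⟩, hxy⟩ := not_subsingleton_iff.1 hnsub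
  obtain ⟨U, V, hUo, hVo, hxU, hyV, hUV⟩ := t2_separation hxy
  have key : ∀ z ∈ C', ∀ W : Set Y, IsOpen W → f z ∈ W → ∃ D, IsClosed D ∧
      ¬(f '' D).Countable ∧ D ⊆ C ∧ ediam D ≤ ε ∧ f '' D ⊆ W := by
    intro z hz W hW hzW
    obtain ⟨r, hr, hrW⟩ := nhds_basis_closedEBall.mem_iff.1
      (hf.continuousAt.preimage_mem_nhds (hW.mem_nhds hzW))
    have hpos : 0 < min r (ε / 2) := lt_min hr (ENNReal.half_pos hε.ne')
    refine ⟨closedEBall z (min r (ε / 2)) ∩ C, isClosed_closedEBall.inter hC,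
      hz.2 _ (closedEBall_mem_nhds z hpos), inter_subset_right, ?_, ?_⟩
    · calc ediam (closedEBall z (min r (ε / 2)) ∩ C)
          ≤ ediam (closedEBall z (min r (ε / 2))) := ediam_mono inter_subset_left
        _ ≤ 2 * min r (ε / 2) := ediam_closedEBall_le
        _ ≤ 2 * (ε / 2) := by gcongr; exact min_le_right _ _
        _ = ε := ENNReal.mul_div_cancel (by simp) (by simp)
    · rintro _ ⟨w, hw, rfl⟩
      exact hrW (closedEBall_subset_closedEBall (min_le_left _ _) hw.1)
  obtain ⟨C₀, h₀, h₀', h₀'', h₀d, h₀U⟩ := key x hx U hUo hxU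
  obtain ⟨C₁, h₁, h₁', h₁'', h₁d, h₁V⟩ := key y hy V hVo hyV
  exact ⟨C₀, C₁, ⟨h₀, h₀', h₀'', h₀d⟩, ⟨h₁, h₁', h₁'', h₁d⟩, hUV.mono h₀U h₁V⟩

open Set Filter Topology Metric CantorScheme in
/-- A continuous map on a Polish space with uncountable range is injective on a copy of the
Cantor space. -/
theorem Continuous.exists_nat_bool_injective_comp {X Y : Type*} [TopologicalSpace X]
    [PolishSpace X] [TopologicalSpace Y] [T2Space Y] {f : X → Y} (hf : Continuous f)
    (hunc : ¬(range f).Countable) :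
    ∃ g : (ℕ → Bool) → X, Function.Injective (f ∘ g) := by
  let := TopologicalSpace.upgradeIsCompletelyMetrizable X
  obtain ⟨u, -, upos', hu⟩ := exists_seq_strictAnti_tendsto' (zero_lt_one' ENNReal)
  have upos := fun n => (upos' n).1
  let P := Subtype fun E : Set X => IsClosed E ∧ ¬(f '' E).Countable
  choose C0 C1 h0 h1 hdisj using
    fun (C : P) (n : ℕ) => C.2.1.exists_small_diam_splitting_image hf C.2.2 (upos n)
  let DP : List Bool → P := fun l => by
    induction l with
    | nil => exact ⟨univ, isClosed_univ, by rwa [image_univ]⟩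
    | cons a l ih =>
      exact cond a ⟨C1 ih (l.length + 1), (h1 _ _).1, (h1 _ _).2.1⟩
        ⟨C0 ih (l.length + 1), (h0 _ _).1, (h0 _ _).2.1⟩
  let D : List Bool → Set X := fun l => (DP l).val
  have hanti : ClosureAntitone D := by
    refine Antitone.closureAntitone ?_ fun l => (DP l).property.1
    rintro l (_ | _)
    · exact (h0 _ _).2.2.1
    · exact (h1 _ _).2.2.1
  have hdiam : VanishingDiam D := by
    intro x
    apply tendsto_of_tendsto_of_tendsto_of_le_of_le' tendsto_const_nhds hu
    · simp
    rw [eventually_atTop]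
    refine ⟨1, fun m (hm : 1 ≤ m) => ?_⟩
    obtain ⟨n, rfl⟩ := Nat.exists_eq_succ_of_ne_zero (Nat.one_le_iff_ne_zero.1 hm)
    dsimp
    cases x n
    · convert! (h0 _ _).2.2.2
      rw [PiNat.res_length]
    · convert! (h1 _ _).2.2.2
      rw [PiNat.res_length]
  have hdisj' : CantorScheme.Disjoint fun l => f '' D l := by
    rintro l (a | a) (b | b) hab <;> try contradiction
    · exact hdisj _ _
    · exact (hdisj _ _).symm
  have hnonempty : ∀ l, (D l).Nonempty := fun l => by
    by_contra hempty
    exact (DP l).2.2 (by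
      rw [show (DP l).1 = ∅ from not_nonempty_iff_eq_empty.1 hempty]
      simp)
  have hdom : ∀ {x : ℕ → Bool}, x ∈ (inducedMap D).1 := fun {x} => by
    rw [hanti.map_of_vanishingDiam hdiam hnonempty]
    apply mem_univ
  refine ⟨fun x => (inducedMap D).2 ⟨x, hdom⟩, fun x y hxy => ?_⟩
  have hmem : ∀ z n, f ((inducedMap D).2 ⟨z, hdom⟩) ∈ f '' D (PiNat.res z n) :=
    fun z n => mem_image_of_mem f (map_mem ⟨z, hdom⟩ n)
  refine PiNat.res_injective (funext fun n => ?_)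
  induction n with
  | zero => simp
  | succ n ih =>
    rw [PiNat.res_succ, PiNat.res_succ, ih]
    congr 1
    by_contra hne
    have hx := hmem x (n + 1)
    have hy := hmem y (n + 1)
    rw [PiNat.res_succ, ih] at hx
    rw [PiNat.res_succ] at hy
    exact (hdisj' (PiNat.res y n) hne).le_bot
      ⟨hx, (congrArg (· ∈ f '' D (y n :: PiNat.res y n)) hxy).mpr hy⟩

open Set Cardinal in
/-- A map on a Polish space for which every set has a Borel preimage has countable range. -/
theorem Set.countable_range_of_forall_measurableSet_preimage {X Y : Type*} [TopologicalSpace X]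
    [PolishSpace X] [MeasurableSpace X] [BorelSpace X] [TopologicalSpace Y] [T2Space Y]
    [SecondCountableTopology Y] {f : X → Y} (hf : ∀ s : Set Y, MeasurableSet (f ⁻¹' s)) :
    (range f).Countable := by
  by_contra hunc
  let : MeasurableSpace Y := ⊤
  have hfm : Measurable f := fun s _ => hf s
  have : OpensMeasurableSpace Y := ⟨le_top⟩
  have hcard : #{t : Set X | MeasurableSet t} ≤ continuum := by
    obtain ⟨b, hb, hgen⟩ := MeasurableSpace.CountablyGenerated.isCountablyGenerated (α := X)
    rw [hgen]
    exact MeasurableSpace.cardinal_measurableSet_le_continuum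
      (hb.le_aleph0.trans aleph0_le_continuum)
  obtain ⟨τ, -, hτ, hp⟩ := hfm.exists_continuous
  obtain ⟨g, hg⟩ := @Continuous.exists_nat_bool_injective_comp X Y τ hp _ _ f hτ hunc
  have hinj : Function.Injective fun s : Set (ℕ → Bool) =>
      (⟨f ⁻¹' (f ∘ g '' s), hf _⟩ : {t : Set X | MeasurableSet t}) := by
    intro s t hst
    have hst' : f ⁻¹' (f ∘ g '' s) = f ⁻¹' (f ∘ g '' t) := congrArg Subtype.val hst
    have hpre : ∀ s : Set (ℕ → Bool), g ⁻¹' (f ⁻¹' (f ∘ g '' s)) = s := fun s => by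
      rw [← preimage_comp, preimage_image_eq _ hg]
    rw [← hpre s, hst', hpre t]
  have hle := (lift_mk_le_lift_mk_of_injective hinj).trans (lift_le.2 hcard)
  have hlt : (continuum : Cardinal.{0}) < #(Set (ℕ → Bool)) := by
    simpa using cantor continuum
  rw [lift_continuum, ← lift_continuum.{_, 0}, lift_le] at hle
  exact hle.not_gt hlt

open Set Metric in
/-- A Borel map from a Polish space to a metric space is strongly measurable, even when the
target is not separable. -/
theorem stronglyMeasurable_of_measurable_polishSpace {X Y : Type*} [TopologicalSpace X]
    [PolishSpace X] [MeasurableSpace X] [BorelSpace X] [MetricSpace Y] [MeasurableSpace Y]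
    [BorelSpace Y] {f : X → Y} (hf : Measurable f) : StronglyMeasurable f := by
  refine stronglyMeasurable_iff_measurable_separable.2 ⟨hf, ?_⟩
  rcases isEmpty_or_nonempty X with hX | ⟨⟨x₀⟩⟩
  · simpa [range_eq_empty] using (countable_empty (α := Y)).isSeparable
  have : Nonempty X := ⟨x₀⟩
  suffices hnet : ∀ ε > (0 : ENNReal), ∃ t : Set Y, t.Countable ∧
      range f ⊆ ⋃ x ∈ t, closedEBall x ε by
    obtain ⟨t, -, ht, hcl⟩ := EMetric.subset_countable_closure_of_almost_dense_set _ hnet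
    exact ⟨t, ht, hcl⟩
  intro ε hε
  obtain ⟨r, hr, hrε⟩ := ENNReal.lt_iff_exists_nnreal_btwn.1 hε
  have hr : (0 : ℝ) < r := mod_cast hr
  obtain ⟨D, hD⟩ := zorn_subset
    {D : Set Y | D ⊆ range f ∧ D.Pairwise fun x y => (r : ℝ) ≤ dist x y} fun c hc hchain =>
      ⟨⋃₀ c, ⟨sUnion_subset fun s hs => (hc hs).1,
        (pairwise_sUnion hchain.directedOn).2 fun s hs => (hc hs).2⟩,
        fun s hs => subset_sUnion_of_mem hs⟩
  have hclosed : ∀ s ⊆ D, MeasurableSet s := fun s hs =>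
    (isClosed_of_pairwise_le_dist hr (hD.prop.2.mono hs)).measurableSet
  refine ⟨D, ?_, ?_⟩
  · classical
    let σ : Y → X := Function.invFun f
    have hσ : ∀ y ∈ D, f (σ y) = y := fun y hy => Function.invFun_eq (hD.prop.1 hy)
    let g : X → X := fun x => if f x ∈ D then σ (f x) else x₀
    have hg : (range g).Countable := by
      refine countable_range_of_forall_measurableSet_preimage fun s => ?_
      have hpre : g ⁻¹' s = f ⁻¹' (D ∩ σ ⁻¹' s) ∪ (f ⁻¹' Dᶜ ∩ {_x | x₀ ∈ s}) := by
        ext x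
        by_cases hx : f x ∈ D <;> simp [g, hx]
      rw [hpre]
      exact (hf (hclosed _ inter_subset_left)).union
        ((hf (hclosed D subset_rfl).compl).inter (.const _))
    refine (hg.image f).mono ?_
    intro y hy
    exact ⟨σ y, ⟨σ y, by simp only [g, hσ y hy, hy, if_true]⟩, hσ y hy⟩
  · intro y hy
    by_contra hcov
    have hfar : ∀ x ∈ D, (r : ℝ) ≤ dist y x := by
      intro x hx
      by_contra! hlt
      refine hcov (mem_iUnion₂.2 ⟨x, hx, ?_⟩)
      rw [mem_closedEBall, edist_dist]
      refine le_trans ?_ hrε.le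
      rw [← ENNReal.ofReal_coe_nnreal]
      exact ENNReal.ofReal_le_ofReal hlt.le
    have hmem : y ∈ D := hD.le_of_ge ⟨insert_subset hy hD.prop.1,
      hD.prop.2.insert fun x hx _ => ⟨hfar x hx, dist_comm y x ▸ hfar x hx⟩⟩
      (subset_insert y D) (mem_insert y D)
    simpa using hr.trans_le (hfar y hmem)

theorem UnitAddCircle.dist_coe_lt_quarter {x t : ℝ} (ht : t ∈ Set.Ioo (x - 1 / 4) (x + 1 / 4)) :
    dist (x : UnitAddCircle) (t : UnitAddCircle) < 1 / 4 := by
  have habs : |x - t| < 1 / 4 := abs_lt.2 ⟨by linarith [ht.2], by linarith [ht.1]⟩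
  rw [dist_eq_norm, ← AddCircle.coe_sub,
    (AddCircle.norm_coe_eq_abs_iff 1 one_ne_zero).2 (by rw [abs_one]; linarith)]
  exact habs

theorem UnitAddCircle.quarter_le_dist_coe {x t : ℝ}
    (ht : t ∈ Set.Ioo (x + 1 / 4) (x + 3 / 4)) :
    1 / 4 ≤ dist (x : UnitAddCircle) (t : UnitAddCircle) := by
  rw [dist_comm, dist_eq_norm, ← AddCircle.coe_sub, UnitAddCircle.norm_eq, le_abs]
  rcases le_or_gt (round (t - x)) 0 with hn | hn
  · have : (round (t - x) : ℝ) ≤ 0 := mod_cast hn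
    exact .inl (by linarith [ht.1])
  · have : (1 : ℝ) ≤ round (t - x) := mod_cast hn
    exact .inr (by linarith [ht.2])

theorem UnitAddCircle.intervalIntegrable_comp_coe {H : Type*} [NormedAddCommGroup H]
    {h : UnitAddCircle → H} (hh : Integrable h)
    (a b : ℝ) : IntervalIntegrable (fun t : ℝ => h t) volume a b := by
  have hper : Function.Periodic (fun t : ℝ => h t) 1 := fun t => by simp
  refine hper.intervalIntegrable (t := 0) one_ne_zero ?_ a b
  rw [intervalIntegrable_iff_integrableOn_Ioc_of_le (by norm_num)]
  exact (UnitAddCircle.measurePreserving_mk 0).integrable_comp_of_integrable hh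

theorem UnitAddCircle.integral_sign_smul {H : Type*} [NormedAddCommGroup H]
    [NormedSpace ℝ H] {h : UnitAddCircle → H} (hh : Integrable h) (x : ℝ) :
    ∫ y : UnitAddCircle, (if dist (x : UnitAddCircle) y < 1 / 4 then (1 : ℝ) else -1) • h y =
      (∫ t in (x - 1 / 4)..(x + 1 / 4), h t) - ∫ t in (x + 1 / 4)..(x + 3 / 4), h t := by
  have hi := UnitAddCircle.intervalIntegrable_comp_coe hh
  have hnear : Set.EqOn (fun t : ℝ => h t) (fun t : ℝ =>
      (if dist (x : UnitAddCircle) t < 1 / 4 then (1 : ℝ) else -1) • h t)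
      (Set.uIoo (x - 1 / 4) (x + 1 / 4)) := fun t ht => by
    rw [Set.uIoo_of_le (by linarith)] at ht
    simp only [if_pos (UnitAddCircle.dist_coe_lt_quarter ht), one_smul]
  have hfar : Set.EqOn (fun t : ℝ => -h t) (fun t : ℝ =>
      (if dist (x : UnitAddCircle) t < 1 / 4 then (1 : ℝ) else -1) • h t)
      (Set.uIoo (x + 1 / 4) (x + 3 / 4)) := fun t ht => by
    rw [Set.uIoo_of_le (by linarith)] at ht
    simp only [if_neg (UnitAddCircle.quarter_le_dist_coe ht).not_gt, neg_smul, one_smul]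
  rw [← UnitAddCircle.intervalIntegral_preimage (x - 1 / 4),
    show x - 1 / 4 + 1 = x + 3 / 4 by ring,
    ← intervalIntegral.integral_add_adjacent_intervals ((hi _ _).congr_uIoo hnear)
      ((hi (x + 1 / 4) _).neg.congr_uIoo hfar),
    ← intervalIntegral.integral_congr_uIoo hnear, ← intervalIntegral.integral_congr_uIoo hfar,
    intervalIntegral.integral_neg, ← sub_eq_add_neg]

theorem UnitAddCircle.integral_sign_smul_eq_primitive {H : Type*} [NormedAddCommGroup H]
    [NormedSpace ℝ H] {h : UnitAddCircle → H}
    (hh : Integrable h) (x : ℝ) :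
    ∫ y : UnitAddCircle, (if dist (x : UnitAddCircle) y < 1 / 4 then (1 : ℝ) else -1) • h y =
      (2 : ℝ) • ((∫ t in (0)..(x + 1 / 4), h t) - ∫ t in (0)..(x - 1 / 4), h t) -
        ∫ y : UnitAddCircle, h y := by
  have hi := UnitAddCircle.intervalIntegrable_comp_coe hh
  rw [UnitAddCircle.integral_sign_smul hh, intervalIntegral.integral_interval_sub_left (hi _ _)
    (hi _ _), ← UnitAddCircle.intervalIntegral_preimage (x - 1 / 4),
    show x - 1 / 4 + 1 = x + 3 / 4 by ring, ← intervalIntegral.integral_add_adjacent_intervals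
      (hi (x - 1 / 4) (x + 1 / 4)) (hi _ (x + 3 / 4))]
  module

/-- Let `𝕋 = ℝ/ℤ` with its Haar probability measure, `f(x,y) = 1` if `dist x y < 1/4` and
`-1` otherwise, let `h : 𝕋 → H` be measurable of unit norm a.e., and
`G(x) = ∫_𝕋 f(x,y) h(y) dy`. Then `G` is 4-Lipschitz, for a.e. `x` one has
`G'(x) = 2 h(x + 1/4) - 2 h(x - 1/4)` (stated for the lift of `G` to `ℝ`), and
`G(x + 1/2) = -G(x)` for all `x`. -/
theorem bell_example2_G_properties (H : Type*) [NormedAddCommGroup H]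
    [InnerProductSpace ℝ H] [MeasurableSpace H] [BorelSpace H] [CompleteSpace H]
    (h : UnitAddCircle → H) (hm : Measurable h)
    (h1 : ∀ᵐ y : UnitAddCircle, ‖h y‖ = 1)
    (G : UnitAddCircle → H)
    (hG : ∀ x : UnitAddCircle,
      G x = ∫ y : UnitAddCircle, (if dist x y < 1/4 then (1:ℝ) else -1) • h y) :
    LipschitzWith 4 G ∧
    (∀ᵐ x : ℝ, HasDerivAt (fun t : ℝ => G (↑t : UnitAddCircle))
      ((2:ℝ) • h ((↑(x + 1/4) : UnitAddCircle)) - (2:ℝ) • h ((↑(x - 1/4) : UnitAddCircle))) x) ∧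
    (∀ x : UnitAddCircle, G (x + (↑(1/2 : ℝ) : UnitAddCircle)) = -G x) := by
  have hint : Integrable h := .of_bound
    (stronglyMeasurable_of_measurable_polishSpace hm).aestronglyMeasurable 1
    (h1.mono fun y hy => hy.le)
  have hi := UnitAddCircle.intervalIntegrable_comp_coe hint
  have hbound : ∀ᵐ t : ℝ, ‖h t‖ ≤ 1 := by
    rw [← Measure.restrict_univ (μ := volume), ← iUnion_Ioc_intCast, ae_restrict_iUnion_iff]
    exact fun n => (UnitAddCircle.measurePreserving_mk n).quasiMeasurePreserving.ae
      (h1.mono fun y hy => hy.le)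
  let F : ℝ → H := fun x => ∫ t in (0)..x, h t
  have hGF : ∀ x : ℝ, G x = (2 : ℝ) • (F (x + 1 / 4) - F (x - 1 / 4)) - ∫ y, h y := fun x =>
    (hG x).trans (UnitAddCircle.integral_sign_smul_eq_primitive hint x)
  have hF : ∀ a b : ℝ, ‖F a - F b‖ ≤ |a - b| := fun a b => by
    simp only [F, intervalIntegral.integral_interval_sub_left (hi _ _) (hi _ _)]
    simpa using intervalIntegral.norm_integral_le_of_norm_le_const_ae
      (hbound.mono fun t ht _ => ht) (a := b) (b := a)
  refine ⟨.of_dist_le_mul fun x y => ?_, ?_, fun x => ?_⟩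
  · obtain ⟨s, rfl⟩ := QuotientAddGroup.mk_surjective x
    obtain ⟨u, hu, hux⟩ : ∃ u : ℝ, (u : UnitAddCircle) = y ∧
        |s - u| = dist (s : UnitAddCircle) y := by
      obtain ⟨t, rfl⟩ := QuotientAddGroup.mk_surjective y
      refine ⟨t + round (s - t), ?_, ?_⟩
      · simp
      · rw [dist_eq_norm, ← AddCircle.coe_sub, UnitAddCircle.norm_eq, sub_sub]
    subst hu
    change dist (G (s : UnitAddCircle)) (G (u : UnitAddCircle)) ≤ 4 * dist (s : UnitAddCircle) u
    rw [← hux, hGF, hGF, dist_eq_norm]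
    calc ‖_‖ =
          ‖(2 : ℝ) • ((F (s + 1 / 4) - F (u + 1 / 4)) - (F (s - 1 / 4) - F (u - 1 / 4)))‖ := by
          congr 1; module
      _ = 2 * ‖(F (s + 1 / 4) - F (u + 1 / 4)) - (F (s - 1 / 4) - F (u - 1 / 4))‖ := by
          rw [norm_smul]; norm_num
      _ ≤ 2 * (|s + 1 / 4 - (u + 1 / 4)| + |s - 1 / 4 - (u - 1 / 4)|) := by
          gcongr; exact (norm_sub_le _ _).trans (add_le_add (hF _ _) (hF _ _))
      _ = 4 * |s - u| := by
          rw [add_sub_add_right_eq_sub, sub_sub_sub_cancel_right]; ring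
  · have hloc : LocallyIntegrable (fun t : ℝ => h t) := fun x =>
      ⟨Set.Ioc (x - 1) (x + 1), Ioc_mem_nhds (by linarith) (by linarith), (hi _ _).1⟩
    have hd := LocallyIntegrable.ae_hasDerivAt_integral hloc
    have hplus := (measurePreserving_add_right volume (1 / 4 : ℝ)).quasiMeasurePreserving.ae hd
    have hminus := (measurePreserving_sub_right volume (1 / 4 : ℝ)).quasiMeasurePreserving.ae hd
    filter_upwards [hplus, hminus] with x hp hq
    simp only [hGF, ← smul_sub]
    exact ((((hp 0).comp_add_const x (1 / 4)).sub ((hq 0).comp_sub_const x (1 / 4))).const_smul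
      (2 : ℝ)).sub_const _
  · obtain ⟨s, rfl⟩ := QuotientAddGroup.mk_surjective x
    change G ((s : UnitAddCircle) + ((1 / 2 : ℝ) : UnitAddCircle)) = -G (s : UnitAddCircle)
    rw [← AddCircle.coe_add, hGF, hGF]
    have hper : F (s + 3 / 4) - F (s - 1 / 4) = ∫ y, h y := by
      simp only [F]
      rw [intervalIntegral.integral_interval_sub_left (hi _ _) (hi _ _),
        ← UnitAddCircle.intervalIntegral_preimage (s - 1 / 4),
        show s - 1 / 4 + 1 = s + 3 / 4 by ring]
    rw [← hper, show s + 1 / 2 + 1 / 4 = s + 3 / 4 by ring,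
      show s + 1 / 2 - 1 / 4 = s + 1 / 4 by ring]
    module
end
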